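/- Let $1<p<2$ and $p\le q\le\infty$. Let $(\beta_k)_{k\in\mathbb{Z}}$ be a family of functions in $L^1(\mathbb{R}^d)$ with $\sup_k \|\beta_k\|_{L^1}\le A$ and $\sup_{\xi}\sum_{k\in\mathbb{Z}}|\widehat{\beta_k}(\xi)|\le B$. Then for any family $(f_k)_{k\in\mathbb{Z}}$ of measurable functions one has $\big\|\sum_k \beta_k * f_k\big\|_{L^{p,q}(\mathbb{R}^d)} \le C(p,q,A,B) \big(\sum_k \|f_k\|_{L^{p,q}}^p\big)^{1/p}$. -/

import Mathlib

open MeasureTheory ENNReal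
open scoped FourierTransform Convolution

/-- A dyadic version of the Lorentz space quasi-norm `‖f‖_{L^{p,q}(μ)}`,
with the convention that `q = ∞` gives the weak type quasi-norm. -/
noncomputable def lorentzNorm {α : Type*} [MeasurableSpace α] (μ : Measure α)
    (p : ℝ) (q : ℝ≥0∞) {E : Type*} [NormedAddCommGroup E] (f : α → E) : ℝ≥0∞ :=
  if q = ∞ then
    ⨆ m : ℤ, (2 : ℝ≥0∞) ^ m * (μ {x | (2 : ℝ) ^ m < ‖f x‖}) ^ (1 / p)
  else
    (∑' m : ℤ, ((2 : ℝ≥0∞) ^ m) ^ q.toReal *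
      (μ {x | (2 : ℝ) ^ m < ‖f x‖}) ^ (q.toReal / p)) ^ (1 / q.toReal)

section AlmostOrthogonality

open Filter Topology Set

section Plancherel

variable {V : Type*} [NormedAddCommGroup V] [InnerProductSpace ℝ V] [FiniteDimensional ℝ V]
  [MeasurableSpace V] [BorelSpace V]

/-- The Fourier integral is self-adjoint with respect to the bilinear pairing. -/
theorem integral_mul_fourier_eq_flip {f g : V → ℂ} (hf : Integrable f) (hg : Integrable g) :
    ∫ ξ, g ξ * 𝓕 f ξ = ∫ x, 𝓕 g x * f x := by
  have h := VectorFourier.integral_fourierIntegral_smul_eq_flip (L := innerₗ V)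
    Real.continuous_fourierChar continuous_inner hf hg
  rw [flip_innerₗ] at h
  simp only [smul_eq_mul] at h
  calc ∫ ξ, g ξ * 𝓕 f ξ = ∫ ξ, 𝓕 f ξ * g ξ := by simp_rw [mul_comm]
    _ = ∫ x, f x * 𝓕 g x := h
    _ = _ := by simp_rw [mul_comm]

/-- On `L¹ ∩ L²` the `L²` Fourier transform is given by the Fourier integral. -/
theorem coeFn_fourier_toLp {f : V → ℂ} (hf₁ : Integrable f) (hf₂ : MemLp f 2) :
    ((𝓕 (hf₂.toLp f) : Lp (α := V) ℂ 2 volume) : V → ℂ) =ᵐ[volume] 𝓕 f := by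
  have hcont : Continuous (𝓕 f) :=
    VectorFourier.fourierIntegral_continuous Real.continuous_fourierChar continuous_inner hf₁
  refine ae_eq_of_integral_contDiff_smul_eq
    ((Lp.memLp _).locallyIntegrable one_le_two) hcont.locallyIntegrable ?_
  intro g hg hgc
  have hgc' : HasCompactSupport (fun x ↦ (g x : ℂ)) := hgc.comp_left (g := Complex.ofReal) rfl
  have hg' : ContDiff ℝ (⊤ : ℕ∞) (fun x ↦ (g x : ℂ)) := Complex.ofRealCLM.contDiff.comp hg
  let φ : SchwartzMap V ℂ := hgc'.toSchwartzMap hg'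
  have hφ : ∀ x, φ x = g x := fun x ↦ rfl
  have h := congrArg (fun T ↦ T φ) (Lp.fourier_toTemperedDistribution_eq (hf₂.toLp f))
  simp only [TemperedDistribution.fourier_apply, Lp.toTemperedDistribution_apply,
    smul_eq_mul] at h
  calc ∫ x, g x • ((𝓕 (hf₂.toLp f) : Lp (α := V) ℂ 2 volume) : V → ℂ) x
      = ∫ x, φ x * ((𝓕 (hf₂.toLp f) : Lp (α := V) ℂ 2 volume) : V → ℂ) x := by
        simp [hφ]
    _ = ∫ x, 𝓕 φ x * (hf₂.toLp f) x := h.symm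
    _ = ∫ x, 𝓕 φ x * f x := by
        refine integral_congr_ae ?_
        filter_upwards [hf₂.coeFn_toLp] with x hx
        rw [hx]
    _ = ∫ x, φ x * 𝓕 f x := by
        rw [integral_mul_fourier_eq_flip hf₁ (φ.integrable (μ := volume)), SchwartzMap.fourier_coe]
    _ = ∫ x, g x • 𝓕 f x := by simp [hφ]

theorem eLpNorm_two_sq {α : Type*} [MeasurableSpace α] {μ : Measure α} (f : α → ℂ) :
    eLpNorm f 2 μ ^ 2 = ∫⁻ x, ‖f x‖ₑ ^ 2 ∂μ := by
  simpa using eLpNorm_nnreal_pow_eq_lintegral (f := f) (μ := μ) (p := 2) two_ne_zero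

/-- Plancherel's theorem for functions in `L¹ ∩ L²`. -/
theorem lintegral_enorm_fourier_sq {f : V → ℂ} (hf₁ : Integrable f) (hf₂ : MemLp f 2) :
    ∫⁻ ξ, ‖𝓕 f ξ‖ₑ ^ 2 = ∫⁻ x, ‖f x‖ₑ ^ 2 := by
  rw [← eLpNorm_two_sq, ← eLpNorm_two_sq, ← eLpNorm_congr_ae (coeFn_fourier_toLp hf₁ hf₂),
    ← eLpNorm_congr_ae hf₂.coeFn_toLp, ← Lp.enorm_def, ← Lp.enorm_def, ← ofReal_norm,
    ← ofReal_norm, Lp.norm_fourier_eq]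

end Plancherel

section Convolution

variable {V : Type*} [NormedAddCommGroup V] [InnerProductSpace ℝ V] [FiniteDimensional ℝ V]
  [MeasurableSpace V] [BorelSpace V]

theorem aestronglyMeasurable_mul_convolution {f g : V → ℂ} (hf : AEStronglyMeasurable f)
    (hg : AEStronglyMeasurable g) :
    AEStronglyMeasurable (f ⋆[ContinuousLinearMap.mul ℂ ℂ] g) :=
  (hf.convolution_integrand (ContinuousLinearMap.mul ℂ ℂ) hg).integral_prod_right'

/-- Young's inequality `‖f * g‖₁ ≤ ‖f‖₁ ‖g‖₁`. -/
theorem lintegral_enorm_mul_convolution_le {f g : V → ℂ} (hf : AEStronglyMeasurable f)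
    (hg : AEStronglyMeasurable g) :
    ∫⁻ x, ‖(f ⋆[ContinuousLinearMap.mul ℂ ℂ] g) x‖ₑ ≤ (∫⁻ x, ‖f x‖ₑ) * ∫⁻ x, ‖g x‖ₑ := by
  have hm := (hf.convolution_integrand (ContinuousLinearMap.mul ℂ ℂ) hg).enorm
  calc ∫⁻ x, ‖(f ⋆[ContinuousLinearMap.mul ℂ ℂ] g) x‖ₑ
      ≤ ∫⁻ x, ∫⁻ t, ‖f t * g (x - t)‖ₑ :=
        lintegral_mono fun x ↦ enorm_integral_le_lintegral_enorm _
    _ = ∫⁻ t, ∫⁻ x, ‖f t * g (x - t)‖ₑ := lintegral_lintegral_swap hm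
    _ = ∫⁻ t, ‖f t‖ₑ * ∫⁻ x, ‖g x‖ₑ := by
        refine lintegral_congr fun t ↦ ?_
        simp_rw [enorm_mul]
        rw [lintegral_const_mul' _ _ enorm_ne_top,
          lintegral_sub_right_eq_self (fun x ↦ ‖g x‖ₑ) t]
    _ = _ := lintegral_mul_const'' _ hf.enorm

theorem convolutionExistsAt_mul_of_bounded {f g : V → ℂ} (hf : Integrable f)
    (hg : AEStronglyMeasurable g) {M : ℝ} (hM : ∀ x, ‖g x‖ ≤ M) (x : V) :
    ConvolutionExistsAt f g x (ContinuousLinearMap.mul ℂ ℂ) := by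
  refine BddAbove.convolutionExistsAt (s := univ) _ ⟨M, ?_⟩ MeasurableSet.univ (fun _ _ ↦ mem_univ _)
    hf.integrableOn hg
  rintro _ ⟨y, -, rfl⟩
  exact hM y

theorem norm_mul_convolution_le_of_bounded {f g : V → ℂ} {M : ℝ} (hM : ∀ x, ‖g x‖ ≤ M) (x : V)
    (hf : Integrable f) :
    ‖(f ⋆[ContinuousLinearMap.mul ℂ ℂ] g) x‖ ≤ (∫ t, ‖f t‖) * M := by
  rw [← integral_mul_const]
  refine norm_integral_le_of_norm_le (hf.norm.mul_const M) (Eventually.of_forall fun t ↦ ?_)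
  simpa using mul_le_mul_of_nonneg_left (hM (x - t)) (norm_nonneg (f t))

end Convolution

section DistributionalEstimates

variable {V : Type*} [NormedAddCommGroup V] [InnerProductSpace ℝ V] [FiniteDimensional ℝ V]
  [MeasurableSpace V] [BorelSpace V] {ι : Type*}

theorem memLp_two_of_integrable_of_bounded {w : V → ℂ} (hw : Integrable w) {M : ℝ}
    (hM : ∀ x, ‖w x‖ ≤ M) : MemLp w 2 := by
  rw [memLp_two_iff_integrable_sq_norm hw.aestronglyMeasurable]
  refine (hw.norm.const_mul M).mono' (hw.aestronglyMeasurable.norm.pow 2)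
    (Eventually.of_forall fun x ↦ ?_)
  rw [Real.norm_of_nonneg (by positivity), sq]
  exact mul_le_mul_of_nonneg_right (hM x) (norm_nonneg _)

theorem enorm_sum_mul_sq_le (S : Finset ι) (b c : ι → ℂ) :
    ‖∑ k ∈ S, b k * c k‖ₑ ^ 2 ≤ (∑ k ∈ S, ‖b k‖ₑ) ^ 2 * ∑ k ∈ S, ‖c k‖ₑ ^ 2 := by
  simp only [enorm_eq_nnnorm]
  norm_cast
  calc ‖∑ k ∈ S, b k * c k‖₊ ^ 2 ≤ (∑ k ∈ S, ‖b k‖₊ * ‖c k‖₊) ^ 2 := by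
        gcongr
        exact (nnnorm_sum_le _ _).trans (by simp)
    _ ≤ (∑ k ∈ S, ‖b k‖₊ ^ 2) * ∑ k ∈ S, ‖c k‖₊ ^ 2 := Finset.sum_mul_sq_le_sq_mul_sq _ _ _
    _ ≤ _ := by
        gcongr
        exact Finset.sum_sq_le_sq_sum_of_nonneg fun _ _ ↦ zero_le

theorem fourier_sum_mul_convolution {β u : ι → V → ℂ} (S : Finset ι)
    (hβ : ∀ k, Integrable (β k)) (hu : ∀ k, Integrable (u k)) (ξ : V) :
    𝓕 (fun x ↦ ∑ k ∈ S, (β k ⋆[ContinuousLinearMap.mul ℂ ℂ] u k) x) ξ =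
      ∑ k ∈ S, 𝓕 (β k) ξ * 𝓕 (u k) ξ := by
  rw [Real.fourier_eq]
  simp_rw [Finset.smul_sum]
  rw [integral_finsetSum]
  · refine Finset.sum_congr rfl fun k _ ↦ ?_
    rw [← Real.fourier_mul_convolution_eq (hβ k) (hu k), Real.fourier_eq]
  · intro k _
    exact (Real.fourierIntegral_convergent_iff ξ).2 ((hβ k).integrable_convolution _ (hu k))

theorem lintegral_enorm_sum_convolution_sq_le_of_integrable {β u : ι → V → ℂ} (S : Finset ι)
    (hβ : ∀ k, Integrable (β k)) {B : ℝ≥0∞} (hB : ∀ ξ, ∑ k ∈ S, ‖𝓕 (β k) ξ‖ₑ ≤ B)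
    (hu : ∀ k, Integrable (u k)) {M : ℝ} (hM : ∀ k x, ‖u k x‖ ≤ M) :
    ∫⁻ x, ‖∑ k ∈ S, (β k ⋆[ContinuousLinearMap.mul ℂ ℂ] u k) x‖ₑ ^ 2 ≤
      B ^ 2 * ∑ k ∈ S, ∫⁻ x, ‖u k x‖ₑ ^ 2 := by
  have hw : Integrable (fun x ↦ ∑ k ∈ S, (β k ⋆[ContinuousLinearMap.mul ℂ ℂ] u k) x) :=
    integrable_finsetSum _ fun k _ ↦ (hβ k).integrable_convolution _ (hu k)
  have hw₂ := memLp_two_of_integrable_of_bounded hw (M := ∑ k ∈ S, (∫ t, ‖β k t‖) * M) fun x ↦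
    (norm_sum_le _ _).trans
      (Finset.sum_le_sum fun k _ ↦ norm_mul_convolution_le_of_bounded (hM k) x (hβ k))
  have hum : ∀ k, AEMeasurable fun ξ ↦ ‖𝓕 (u k) ξ‖ₑ ^ 2 := fun k ↦
    ((VectorFourier.fourierIntegral_continuous Real.continuous_fourierChar
      continuous_inner (hu k)).aestronglyMeasurable.enorm.pow_const 2)
  rw [← lintegral_enorm_fourier_sq hw hw₂]
  calc ∫⁻ ξ, ‖𝓕 (fun x ↦ ∑ k ∈ S, (β k ⋆[ContinuousLinearMap.mul ℂ ℂ] u k) x) ξ‖ₑ ^ 2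
      ≤ ∫⁻ ξ, B ^ 2 * ∑ k ∈ S, ‖𝓕 (u k) ξ‖ₑ ^ 2 := by
        refine lintegral_mono fun ξ ↦ ?_
        rw [fourier_sum_mul_convolution S hβ hu]
        refine (enorm_sum_mul_sq_le _ _ _).trans ?_
        gcongr
        exact hB ξ
    _ = B ^ 2 * ∑ k ∈ S, ∫⁻ ξ, ‖𝓕 (u k) ξ‖ₑ ^ 2 := by
        rw [lintegral_const_mul'' _ (Finset.aemeasurable_fun_sum _ fun k _ ↦ hum k),
          lintegral_finsetSum' _ fun k _ ↦ hum k]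
    _ = _ := by
        simp_rw [fun k ↦ lintegral_enorm_fourier_sq (hu k)
          (memLp_two_of_integrable_of_bounded (hu k) (hM k))]

/-- The `ℓ²(L²) → L²` bound for finitely many bounded functions. -/
theorem lintegral_enorm_sum_convolution_sq_le {β h : ι → V → ℂ} (S : Finset ι)
    (hβ : ∀ k, Integrable (β k)) {B : ℝ≥0∞} (hB : ∀ ξ, ∑ k ∈ S, ‖𝓕 (β k) ξ‖ₑ ≤ B)
    (hh : ∀ k, Measurable (h k)) {M : ℝ} (hM : ∀ k x, ‖h k x‖ ≤ M) :
    ∫⁻ x, ‖∑ k ∈ S, (β k ⋆[ContinuousLinearMap.mul ℂ ℂ] h k) x‖ₑ ^ 2 ≤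
      B ^ 2 * ∑ k ∈ S, ∫⁻ x, ‖h k x‖ₑ ^ 2 := by
  set u : ℕ → ι → V → ℂ := fun n k ↦ (Metric.closedBall 0 n).indicator (h k) with hu_def
  have hle : ∀ n k x, ‖u n k x‖ ≤ ‖h k x‖ := fun n k x ↦ norm_indicator_le_norm_self _ _
  have huM : ∀ n k x, ‖u n k x‖ ≤ M := fun n k x ↦ (hle n k x).trans (hM k x)
  have hum : ∀ n k, Measurable (u n k) := fun n k ↦
    (hh k).indicator Metric.isClosed_closedBall.measurableSet
  have hu : ∀ n k, Integrable (u n k) := fun n k ↦ by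
    refine (integrable_indicator_iff Metric.isClosed_closedBall.measurableSet).2 ?_
    exact Measure.integrableOn_of_bounded (measure_closedBall_lt_top).ne
      (hh k).aestronglyMeasurable (Eventually.of_forall (hM k))
  have hlim : ∀ k x, Tendsto (fun n ↦ (β k ⋆[ContinuousLinearMap.mul ℂ ℂ] u n k) x) atTop
      (𝓝 ((β k ⋆[ContinuousLinearMap.mul ℂ ℂ] h k) x)) := by
    intro k x
    refine tendsto_integral_of_dominated_convergence (fun t ↦ ‖β k t‖ * M)
      (fun n ↦ (convolutionExistsAt_mul_of_bounded (hβ k) (hum n k).aestronglyMeasurable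
        (huM n k) x).aestronglyMeasurable) ((hβ k).norm.mul_const M)
      (fun n ↦ Eventually.of_forall fun t ↦ ?_) (Eventually.of_forall fun t ↦ ?_)
    · simpa using mul_le_mul_of_nonneg_left (huM n k (x - t)) (norm_nonneg (β k t))
    · refine tendsto_const_nhds.congr' ?_
      filter_upwards [eventually_ge_atTop ⌈‖x - t‖⌉₊] with n hn
      have : x - t ∈ Metric.closedBall (0 : V) n := by
        simpa using (Nat.le_ceil _).trans (Nat.cast_le.2 hn)
      simp [hu_def, indicator_of_mem this]
  calc ∫⁻ x, ‖∑ k ∈ S, (β k ⋆[ContinuousLinearMap.mul ℂ ℂ] h k) x‖ₑ ^ 2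
      = ∫⁻ x, liminf (fun n ↦ ‖∑ k ∈ S, (β k ⋆[ContinuousLinearMap.mul ℂ ℂ] u n k) x‖ₑ ^ 2)
          atTop := by
        refine lintegral_congr fun x ↦ (Tendsto.liminf_eq ?_).symm
        exact ((ENNReal.continuous_pow 2).tendsto _).comp
          ((tendsto_finsetSum S fun k _ ↦ hlim k x).enorm)
    _ ≤ liminf (fun n ↦ ∫⁻ x,
          ‖∑ k ∈ S, (β k ⋆[ContinuousLinearMap.mul ℂ ℂ] u n k) x‖ₑ ^ 2) atTop := by
        refine lintegral_liminf_le' fun n ↦ ?_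
        exact ((Finset.aestronglyMeasurable_fun_sum S fun k _ ↦
          aestronglyMeasurable_mul_convolution (hβ k).aestronglyMeasurable
            (hum n k).aestronglyMeasurable).enorm.pow_const 2)
    _ ≤ _ := by
        refine liminf_le_of_le (by isBoundedDefault) fun b hb ↦ ?_
        obtain ⟨n, hn⟩ := hb.exists
        refine hn.trans ((lintegral_enorm_sum_convolution_sq_le_of_integrable S hβ hB (hu n)
          (huM n)).trans ?_)
        gcongr with k _ x
        exact enorm_le_iff_norm_le.2 (hle n k x)

variable [Countable ι]

/-- The weak-type form of the `ℓ²(L²) → L²` bound. -/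
theorem sq_mul_volume_lt_enorm_tsum_convolution_le {β h : ι → V → ℂ}
    (hβ : ∀ k, Integrable (β k)) {B : ℝ≥0∞} (hB : ∀ ξ, ∑' k, ‖𝓕 (β k) ξ‖ₑ ≤ B)
    (hh : ∀ k, Measurable (h k)) {M : ℝ} (hM : ∀ k x, ‖h k x‖ ≤ M) (t : ℝ≥0∞) :
    t ^ 2 * volume {x | t < ‖∑' k, (β k ⋆[ContinuousLinearMap.mul ℂ ℂ] h k) x‖ₑ} ≤
      B ^ 2 * ∑' k, ∫⁻ x, ‖h k x‖ₑ ^ 2 := by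
  obtain ⟨S, hS⟩ := exists_seq_tendsto (atTop : Filter (Finset ι))
  set P : ℕ → V → ℝ≥0∞ := fun n x ↦
    ‖∑ k ∈ S n, (β k ⋆[ContinuousLinearMap.mul ℂ ℂ] h k) x‖ₑ ^ 2 with hP
  have hPm : ∀ n, AEMeasurable (P n) := fun n ↦
    (Finset.aestronglyMeasurable_fun_sum _ fun k _ ↦
      aestronglyMeasurable_mul_convolution (hβ k).aestronglyMeasurable
        (hh k).aestronglyMeasurable).enorm.pow_const 2
  have hLm : AEMeasurable (fun x ↦ liminf (fun n ↦ P n x) atTop) := by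
    refine ⟨fun x ↦ liminf (fun n ↦ (hPm n).mk _ x) atTop,
      .liminf fun n ↦ (hPm n).measurable_mk, ?_⟩
    filter_upwards [ae_all_iff.2 fun n ↦ (hPm n).ae_eq_mk] with x hx
    simp only [hx]
  have hsub : {x | t < ‖∑' k, (β k ⋆[ContinuousLinearMap.mul ℂ ℂ] h k) x‖ₑ} ⊆
      {x | t ^ 2 ≤ liminf (fun n ↦ P n x) atTop} := by
    intro x hx
    have hx' : t < ‖∑' k, (β k ⋆[ContinuousLinearMap.mul ℂ ℂ] h k) x‖ₑ := hx
    have hsum : Summable fun k ↦ (β k ⋆[ContinuousLinearMap.mul ℂ ℂ] h k) x := by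
      by_contra hns
      simp [tsum_eq_zero_of_not_summable hns] at hx'
    have hlim : Tendsto (fun n ↦ P n x) atTop
        (𝓝 (‖∑' k, (β k ⋆[ContinuousLinearMap.mul ℂ ℂ] h k) x‖ₑ ^ 2)) :=
      ((ENNReal.continuous_pow 2).tendsto _).comp (hsum.hasSum.comp hS).enorm
    change t ^ 2 ≤ _
    rw [hlim.liminf_eq]
    gcongr
  calc t ^ 2 * volume {x | t < ‖∑' k, (β k ⋆[ContinuousLinearMap.mul ℂ ℂ] h k) x‖ₑ}
      ≤ t ^ 2 * volume {x | t ^ 2 ≤ liminf (fun n ↦ P n x) atTop} := by gcongr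
    _ ≤ ∫⁻ x, liminf (fun n ↦ P n x) atTop := mul_meas_ge_le_lintegral₀ hLm _
    _ ≤ liminf (fun n ↦ ∫⁻ x, P n x) atTop := lintegral_liminf_le' hPm
    _ ≤ _ := by
        refine liminf_le_of_le (by isBoundedDefault) fun b hb ↦ ?_
        obtain ⟨n, hn⟩ := hb.exists
        refine hn.trans ((lintegral_enorm_sum_convolution_sq_le (S n) hβ
          (fun ξ ↦ (ENNReal.sum_le_tsum _).trans (hB ξ)) hh hM).trans ?_)
        gcongr
        exact ENNReal.sum_le_tsum _

/-- The `ℓ¹(L¹) → L¹` bound. -/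
theorem lintegral_tsum_enorm_convolution_le {β g : ι → V → ℂ}
    (hβ : ∀ k, Integrable (β k)) {A : ℝ≥0∞} (hA : ∀ k, ∫⁻ x, ‖β k x‖ₑ ≤ A)
    (hg : ∀ k, Measurable (g k)) :
    ∫⁻ x, ∑' k, ‖(β k ⋆[ContinuousLinearMap.mul ℂ ℂ] g k) x‖ₑ ≤
      A * ∑' k, ∫⁻ x, ‖g k x‖ₑ := by
  rw [lintegral_tsum fun k ↦ (aestronglyMeasurable_mul_convolution
    (hβ k).aestronglyMeasurable (hg k).aestronglyMeasurable).enorm, ← ENNReal.tsum_mul_left]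
  gcongr with k
  refine (lintegral_enorm_mul_convolution_le (hβ k).aestronglyMeasurable
    (hg k).aestronglyMeasurable).trans ?_
  gcongr
  exact hA k

/-- The distributional estimate for `∑ β_k * f_k` obtained from a splitting `f_k = g_k + h_k`. -/
theorem volume_lt_enorm_tsum_convolution_le {β g h : ι → V → ℂ}
    (hβ : ∀ k, Integrable (β k)) {A B : ℝ≥0∞} (hA : ∀ k, ∫⁻ x, ‖β k x‖ₑ ≤ A) (hA' : A ≠ ∞)
    (hB : ∀ ξ, ∑' k, ‖𝓕 (β k) ξ‖ₑ ≤ B) (hg : ∀ k, Measurable (g k))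
    (hg' : ∑' k, ∫⁻ x, ‖g k x‖ₑ ≠ ∞) (hh : ∀ k, Measurable (h k)) {M : ℝ}
    (hM : ∀ k x, ‖h k x‖ ≤ M) {t : ℝ≥0∞} (ht : t ≠ 0) (ht' : t ≠ ∞) :
    volume {x | t + t < ‖∑' k, (β k ⋆[ContinuousLinearMap.mul ℂ ℂ] (g k + h k)) x‖ₑ} ≤
      (A * ∑' k, ∫⁻ x, ‖g k x‖ₑ) / t + (B ^ 2 * ∑' k, ∫⁻ x, ‖h k x‖ₑ ^ 2) / t ^ 2 := by
  set G : V → ℝ≥0∞ := fun x ↦ ∑' k, ‖(β k ⋆[ContinuousLinearMap.mul ℂ ℂ] g k) x‖ₑ with hG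
  have hGm : AEMeasurable G := AEMeasurable.tsum fun k ↦
    (aestronglyMeasurable_mul_convolution (hβ k).aestronglyMeasurable
      (hg k).aestronglyMeasurable).enorm
  have hGint := lintegral_tsum_enorm_convolution_le hβ hA hg
  have hgi : ∀ k, Integrable (g k) := fun k ↦
    ⟨(hg k).aestronglyMeasurable, lt_of_le_of_lt (ENNReal.le_tsum k) hg'.lt_top⟩
  have hae : ∀ᵐ x, ‖∑' k, (β k ⋆[ContinuousLinearMap.mul ℂ ℂ] (g k + h k)) x‖ₑ ≤
      G x + ‖∑' k, (β k ⋆[ContinuousLinearMap.mul ℂ ℂ] h k) x‖ₑ := by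
    filter_upwards [ae_all_iff.2 fun k ↦
        (hβ k).ae_convolution_exists (ContinuousLinearMap.mul ℂ ℂ) (hgi k),
      ae_lt_top' hGm (ne_top_of_le_ne_top (ENNReal.mul_ne_top hA' hg') hGint)] with x hx hGx
    have hadd : ∀ k, (β k ⋆[ContinuousLinearMap.mul ℂ ℂ] (g k + h k)) x =
        (β k ⋆[ContinuousLinearMap.mul ℂ ℂ] g k) x +
          (β k ⋆[ContinuousLinearMap.mul ℂ ℂ] h k) x := fun k ↦
      (hx k).distrib_add (convolutionExistsAt_mul_of_bounded (hβ k)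
        (hh k).aestronglyMeasurable (hM k) x)
    have hsg : Summable fun k ↦ ‖(β k ⋆[ContinuousLinearMap.mul ℂ ℂ] g k) x‖ₑ.toReal :=
      ENNReal.summable_toReal hGx.ne
    simp only [toReal_enorm] at hsg
    by_cases hs : Summable fun k ↦ (β k ⋆[ContinuousLinearMap.mul ℂ ℂ] (g k + h k)) x
    · have hsh : Summable fun k ↦ (β k ⋆[ContinuousLinearMap.mul ℂ ℂ] h k) x :=
        (hs.sub hsg.of_norm).congr fun k ↦ by rw [hadd]; ring
      simp_rw [hadd]
      rw [hsg.of_norm.tsum_add hsh]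
      refine (enorm_add_le _ _).trans ?_
      gcongr
      exact enorm_tsum_le_tsum_enorm
    · simp [tsum_eq_zero_of_not_summable hs]
  calc volume {x | t + t < ‖∑' k, (β k ⋆[ContinuousLinearMap.mul ℂ ℂ] (g k + h k)) x‖ₑ}
      ≤ volume ({x | t ≤ G x} ∪
          {x | t < ‖∑' k, (β k ⋆[ContinuousLinearMap.mul ℂ ℂ] h k) x‖ₑ}) := by
        refine measure_mono_ae ?_
        filter_upwards [hae] with x hx hxt
        by_contra hcon
        have hcon' : ¬ (t ≤ G x ∨ t < ‖∑' k, (β k ⋆[ContinuousLinearMap.mul ℂ ℂ] h k) x‖ₑ) := hcon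
        push Not at hcon'
        exact absurd (hx.trans (add_le_add hcon'.1.le hcon'.2)) (not_le.2 hxt)
    _ ≤ _ := by
        refine (measure_union_le _ _).trans (add_le_add ?_ ?_)
        · exact (meas_ge_le_lintegral_div hGm ht ht').trans (ENNReal.div_le_div_right hGint _)
        · rw [ENNReal.le_div_iff_mul_le (by simp [ht]) (by simp [ht']), mul_comm]
          exact sq_mul_volume_lt_enorm_tsum_convolution_le hβ hB hh hM t

end DistributionalEstimates

section SequenceNorm

/-- The `ℓ^r` norm of an extended nonnegative sequence indexed by `ℤ`. -/
noncomputable def seqNorm (r : ℝ≥0∞) (a : ℤ → ℝ≥0∞) : ℝ≥0∞ :=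
  if r = ∞ then ⨆ m, a m else (∑' m, a m ^ r.toReal) ^ (1 / r.toReal)

variable {r : ℝ≥0∞} {ι : Type*}

theorem seqNorm_mono {a b : ℤ → ℝ≥0∞} (h : ∀ m, a m ≤ b m) : seqNorm r a ≤ seqNorm r b := by
  unfold seqNorm
  split_ifs
  · exact iSup_mono h
  · gcongr with m
    exact h m

theorem seqNorm_const_mul (hr : 1 ≤ r) (c : ℝ≥0∞) (a : ℤ → ℝ≥0∞) :
    seqNorm r (fun m ↦ c * a m) = c * seqNorm r a := by
  unfold seqNorm
  split_ifs with h
  · rw [ENNReal.mul_iSup]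
  · have hr0 : 0 < r.toReal := ENNReal.toReal_pos (zero_lt_one.trans_le hr).ne' h
    simp_rw [ENNReal.mul_rpow_of_nonneg _ _ hr0.le]
    rw [ENNReal.tsum_mul_left, ENNReal.mul_rpow_of_nonneg _ _ (by positivity),
      ← ENNReal.rpow_mul, mul_one_div_cancel hr0.ne', ENNReal.rpow_one]

theorem seqNorm_comp_add_right (a : ℤ → ℝ≥0∞) (n : ℤ) :
    seqNorm r (fun m ↦ a (m + n)) = seqNorm r a := by
  unfold seqNorm
  split_ifs
  · exact (Equiv.addRight n).iSup_comp (g := a)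
  · congr 1
    exact (Equiv.addRight n).tsum_eq fun m ↦ a m ^ r.toReal

theorem ENNReal.Lp_sum_le {α : Type*} (M : Finset α) (S : Finset ι) (a : ι → α → ℝ≥0∞)
    {s : ℝ} (hs : 1 ≤ s) :
    (∑ m ∈ M, (∑ k ∈ S, a k m) ^ s) ^ (1 / s) ≤ ∑ k ∈ S, (∑ m ∈ M, a k m ^ s) ^ (1 / s) := by
  classical
  have hs0 : 0 < s := by linarith
  induction S using Finset.induction_on with
  | empty => simp [ENNReal.zero_rpow_of_pos hs0, hs0]
  | insert k S hk ih =>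
    simp_rw [Finset.sum_insert hk]
    exact (ENNReal.Lp_add_le M (a k) (fun m ↦ ∑ k ∈ S, a k m) hs).trans (by gcongr)

/-- Minkowski's inequality for infinite sums. -/
theorem seqNorm_tsum_le (hr : 1 ≤ r) (a : ι → ℤ → ℝ≥0∞) :
    seqNorm r (fun m ↦ ∑' k, a k m) ≤ ∑' k, seqNorm r (a k) := by
  unfold seqNorm
  split_ifs with h
  · exact iSup_le fun m ↦ ENNReal.tsum_le_tsum fun k ↦ le_iSup (a k) m
  · have hr1 : 1 ≤ r.toReal := by
      simpa using ENNReal.toReal_mono h hr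
    have hr0 : 0 < r.toReal := by linarith
    rw [one_div, ENNReal.rpow_inv_le_iff hr0, ENNReal.tsum_eq_iSup_sum]
    refine iSup_le fun M ↦ ?_
    have hlim : Tendsto (fun S : Finset ι ↦ ∑ m ∈ M, (∑ k ∈ S, a k m) ^ r.toReal) atTop
        (𝓝 (∑ m ∈ M, (∑' k, a k m) ^ r.toReal)) :=
      tendsto_finsetSum M fun m _ ↦ (ENNReal.continuous_rpow_const.tendsto _).comp
        ENNReal.summable.hasSum
    refine le_of_tendsto' hlim fun S ↦ ?_
    rw [← ENNReal.rpow_inv_le_iff hr0, ← one_div]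
    refine (ENNReal.Lp_sum_le M S a hr1).trans ((ENNReal.sum_le_tsum S).trans ?_)
    gcongr
    exact ENNReal.sum_le_tsum M

/-- Young's inequality for the convolution with a summable kernel. -/
theorem seqNorm_tsum_mul_shift_le (hr : 1 ≤ r) (κ b : ℤ → ℝ≥0∞) :
    seqNorm r (fun m ↦ ∑' n, κ n * b (m + n)) ≤ (∑' n, κ n) * seqNorm r b := by
  refine (seqNorm_tsum_le hr fun n m ↦ κ n * b (m + n)).trans ?_
  simp_rw [fun n ↦ seqNorm_const_mul hr (κ n) fun m ↦ b (m + n), seqNorm_comp_add_right]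
  rw [ENNReal.tsum_mul_right]

end SequenceNorm

section Dyadic

variable {α : Type*} [MeasurableSpace α] (μ : Measure α) {E : Type*} [NormedAddCommGroup E]

/-- The dyadic distribution function `2^{mp} μ(|f| > 2^m)`. -/
noncomputable def dyadicDistrib (p : ℝ) (f : α → E) (m : ℤ) : ℝ≥0∞ :=
  ((2 : ℝ≥0∞) ^ m) ^ p * μ {x | (2 : ℝ) ^ m < ‖f x‖}

variable {μ} {p : ℝ}

theorem lorentzNorm_eq_seqNorm (hp : 0 < p) {q : ℝ≥0∞} (f : α → E) :
    lorentzNorm μ p q f = seqNorm (q / ENNReal.ofReal p) (dyadicDistrib μ p f) ^ (1 / p) := by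
  have hp' : ENNReal.ofReal p ≠ 0 := by simpa using hp
  unfold lorentzNorm seqNorm dyadicDistrib
  by_cases hq : q = ∞
  · subst hq
    rw [if_pos rfl, if_pos (ENNReal.top_div_of_ne_top ENNReal.ofReal_ne_top)]
    refine Eq.trans ?_ ((ENNReal.orderIsoRpow (1 / p) (by positivity)).map_iSup _).symm
    refine iSup_congr fun m ↦ ?_
    rw [ENNReal.orderIsoRpow_apply, ENNReal.mul_rpow_of_nonneg _ _ (by positivity),
      ← ENNReal.rpow_mul, mul_one_div_cancel hp.ne', ENNReal.rpow_one]
  · have hq' : q / ENNReal.ofReal p ≠ ∞ := (ENNReal.div_lt_top hq hp').ne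
    have hr : (q / ENNReal.ofReal p).toReal = q.toReal / p := by
      rw [ENNReal.toReal_div, ENNReal.toReal_ofReal hp.le]
    rw [if_neg hq, if_neg hq', hr, ← ENNReal.rpow_mul]
    congr 1
    · refine tsum_congr fun m ↦ ?_
      rw [ENNReal.mul_rpow_of_nonneg _ _ (by positivity), ← ENNReal.rpow_mul,
        mul_div_cancel₀ _ hp.ne']
    · field_simp

theorem two_zpow_lt_norm_iff (m : ℤ) (z : E) :
    (2 : ℝ) ^ m < ‖z‖ ↔ (2 : ℝ≥0∞) ^ m < ‖z‖ₑ := by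
  have h : (2 : ℝ≥0∞) ^ m = ENNReal.ofReal ((2 : ℝ) ^ m) := by
    rw [← ENNReal.rpow_intCast, ← Real.rpow_intCast,
      ← ENNReal.ofReal_rpow_of_pos two_pos, ENNReal.ofReal_ofNat]
  rw [h, ← ofReal_norm, ENNReal.ofReal_lt_ofReal_iff_of_nonneg (by positivity)]

theorem exists_enorm_mem_Ioc {z : E} (hz : z ≠ 0) :
    ∃ j : ℤ, (2 : ℝ≥0∞) ^ j < ‖z‖ₑ ∧ ‖z‖ₑ ≤ (2 : ℝ≥0∞) ^ (j + 1) :=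
  ENNReal.exists_mem_Ioc_zpow (by simpa using hz) enorm_ne_top one_lt_two ENNReal.ofNat_ne_top

theorem lintegral_tsum_mul_indicator (c : ℤ → ℝ≥0∞) {s : ℤ → Set α}
    (hs : ∀ n, MeasurableSet (s n)) :
    ∫⁻ x, ∑' n, c n * (s n).indicator 1 x ∂μ = ∑' n, c n * μ (s n) := by
  rw [lintegral_tsum fun n ↦
    ((measurable_one.indicator (hs n)).const_mul (c n)).aemeasurable]
  refine tsum_congr fun n ↦ ?_
  rw [lintegral_const_mul _ (measurable_one.indicator (hs n)), lintegral_indicator_one (hs n)]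

variable [MeasurableSpace E] [OpensMeasurableSpace E] {f : α → E}

theorem measurableSet_two_zpow_lt (hf : Measurable f) (m : ℤ) :
    MeasurableSet {x | (2 : ℝ) ^ m < ‖f x‖} :=
  measurableSet_lt measurable_const hf.norm

/-- Layer-cake bound for the large part of a function. -/
theorem lintegral_enorm_indicator_large_le (hf : Measurable f) (m : ℤ) :
    ∫⁻ x, ‖{x | (2 : ℝ) ^ m < ‖f x‖}.indicator f x‖ₑ ∂μ ≤
      ∑' n : ℤ, (if 0 ≤ n then (2 : ℝ≥0∞) ^ (m + n + 1) else 0) *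
        μ {x | (2 : ℝ) ^ (m + n) < ‖f x‖} := by
  rw [← lintegral_tsum_mul_indicator _ fun n ↦ measurableSet_two_zpow_lt hf (m + n)]
  refine lintegral_mono fun x ↦ ?_
  by_cases hx : (2 : ℝ) ^ m < ‖f x‖
  · have hx0 : f x ≠ 0 := by
      rw [← norm_pos_iff]
      exact (zpow_pos two_pos m).trans hx
    obtain ⟨j, hj, hj'⟩ := exists_enorm_mem_Ioc hx0
    have hmj : m < j + 1 := by
      by_contra hcon
      exact absurd (((two_zpow_lt_norm_iff m _).1 hx).trans_le hj')
        (not_lt.2 (ENNReal.zpow_le_of_le one_le_two (not_lt.1 hcon)))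
    refine le_trans ?_ (ENNReal.le_tsum (j - m))
    rw [indicator_of_mem (by exact hx), if_pos (by lia), indicator_of_mem (by
      simpa only [add_sub_cancel, mem_ofPred_eq, two_zpow_lt_norm_iff] using hj)]
    simpa using hj'
  · rw [indicator_of_notMem (by exact hx)]
    simp

/-- Layer-cake bound for the small part of a function. -/
theorem lintegral_enorm_indicator_small_sq_le (hf : Measurable f) (m : ℤ) :
    ∫⁻ x, ‖{x | (2 : ℝ) ^ m < ‖f x‖}ᶜ.indicator f x‖ₑ ^ 2 ∂μ ≤
      ∑' n : ℤ, (if 0 ≤ n then 0 else (2 : ℝ≥0∞) ^ (2 * (m + n + 1))) *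
        μ {x | (2 : ℝ) ^ (m + n) < ‖f x‖} := by
  rw [← lintegral_tsum_mul_indicator _ fun n ↦ measurableSet_two_zpow_lt hf (m + n)]
  refine lintegral_mono fun x ↦ ?_
  by_cases hx : (2 : ℝ) ^ m < ‖f x‖ ∨ f x = 0
  · have : {x | (2 : ℝ) ^ m < ‖f x‖}ᶜ.indicator f x = 0 := by
      rcases hx with hx | hx
      · exact indicator_of_notMem (by simpa using hx) _
      · simp [indicator_apply, hx]
    simp [this]
  · push Not at hx
    obtain ⟨j, hj, hj'⟩ := exists_enorm_mem_Ioc hx.2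
    have hmj : j < m := by
      by_contra hcon
      refine absurd ((two_zpow_lt_norm_iff m _).2 (lt_of_le_of_lt ?_ hj)) (not_lt.2 hx.1)
      exact ENNReal.zpow_le_of_le one_le_two (not_lt.1 hcon)
    refine le_trans ?_ (ENNReal.le_tsum (j - m))
    rw [indicator_of_mem (by simpa using hx.1), if_neg (by lia), indicator_of_mem (by
      simpa only [add_sub_cancel, mem_ofPred_eq, two_zpow_lt_norm_iff] using hj)]
    rw [add_sub_cancel, Pi.one_apply, mul_one, two_mul,
      ENNReal.zpow_add two_ne_zero ENNReal.ofNat_ne_top, ← sq]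
    exact pow_le_pow_left' hj' 2

end Dyadic

section DyadicConvolution

/-- The summable kernel of the dyadic real interpolation argument. -/
noncomputable def dyadicKernel (p : ℝ) (n : ℤ) : ℝ≥0∞ :=
  if 0 ≤ n then 2 ^ (-(n * (p - 1)) : ℝ) else 2 ^ ((n : ℝ) * (2 - p))

theorem tsum_dyadicKernel_ne_top {p : ℝ} (hp1 : 1 < p) (hp2 : p < 2) :
    ∑' n, dyadicKernel p n ≠ ∞ := by
  set δ : ℝ := min (p - 1) (2 - p) with hδ
  have hδ0 : 0 < δ := lt_min (by linarith) (by linarith)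
  set θ : ℝ := (2 : ℝ) ^ (-δ)
  have hθ0 : 0 < θ := by positivity
  have hθ1 : θ < 1 := Real.rpow_lt_one_of_one_lt_of_neg one_lt_two (by linarith)
  have hgeom : Summable fun n : ℕ ↦ θ ^ n := summable_geometric_of_lt_one hθ0.le hθ1
  have hsum : Summable fun n : ℤ ↦ θ ^ n.natAbs :=
    summable_int_iff_summable_nat_and_neg.2 ⟨by simpa using hgeom, by simpa using hgeom⟩
  refine ne_top_of_le_ne_top hsum.tsum_ofReal_ne_top (ENNReal.tsum_le_tsum fun n ↦ ?_)
  have key : θ ^ n.natAbs = (2 : ℝ) ^ (-(δ * |(n : ℝ)|)) := by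
    rw [← Real.rpow_natCast, ← Real.rpow_mul two_pos.le, Nat.cast_natAbs, Int.cast_abs, neg_mul]
  rw [key, ← ENNReal.ofReal_rpow_of_pos two_pos, ENNReal.ofReal_ofNat, dyadicKernel]
  split_ifs with hn
  · refine ENNReal.rpow_le_rpow_of_exponent_le one_le_two ?_
    have hn' : (0 : ℝ) ≤ n := by exact_mod_cast hn
    rw [abs_of_nonneg hn']
    nlinarith [min_le_left (p - 1) (2 - p)]
  · refine ENNReal.rpow_le_rpow_of_exponent_le one_le_two ?_
    have hn' : (n : ℝ) ≤ 0 := by exact_mod_cast (not_le.1 hn).le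
    rw [abs_of_nonpos hn']
    nlinarith [min_le_right (p - 1) (2 - p)]

theorem two_zpow_eq_rpow (n : ℤ) : (2 : ℝ≥0∞) ^ n = 2 ^ (n : ℝ) :=
  (ENNReal.rpow_intCast 2 n).symm

theorem two_rpow_mul_two_rpow (x y : ℝ) : (2 : ℝ≥0∞) ^ x * 2 ^ y = 2 ^ (x + y) :=
  (ENNReal.rpow_add x y two_ne_zero ENNReal.ofNat_ne_top).symm

variable {ι : Type*}

theorem tsum_le_mul_tsum_dyadicDistrib {α E : Type*} [MeasurableSpace α] {μ : Measure α}
    [NormedAddCommGroup E] {p : ℝ} {f : ι → α → E} {m : ℤ} {I : ι → ℝ≥0∞} {w : ℤ → ℝ≥0∞}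
    (hI : ∀ k, I k ≤ ∑' n : ℤ, w n * μ {x | (2 : ℝ) ^ (m + n) < ‖f k x‖}) {c : ℝ≥0∞}
    (hw : ∀ n, w n ≤ c * (dyadicKernel p n * ((2 : ℝ≥0∞) ^ (m + n)) ^ p)) :
    ∑' k, I k ≤ c * ∑' n, dyadicKernel p n * ∑' k, dyadicDistrib μ p (f k) (m + n) :=
  calc ∑' k, I k
    _ ≤ ∑' k, ∑' n : ℤ, c * (dyadicKernel p n * dyadicDistrib μ p (f k) (m + n)) := by
      refine ENNReal.tsum_le_tsum fun k ↦ (hI k).trans (ENNReal.tsum_le_tsum fun n ↦ ?_)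
      rw [dyadicDistrib, ← mul_assoc, ← mul_assoc, mul_assoc c]
      gcongr
      exact hw n
    _ = _ := by
      rw [ENNReal.tsum_comm]
      simp_rw [ENNReal.tsum_mul_left]

variable {V : Type*} [NormedAddCommGroup V] [InnerProductSpace ℝ V] [FiniteDimensional ℝ V]
  [MeasurableSpace V] [BorelSpace V] [Countable ι]

theorem dyadicDistrib_tsum_convolution_le {β f : ι → V → ℂ} (hβ : ∀ k, Integrable (β k))
    {A B : ℝ≥0∞} (hA : ∀ k, ∫⁻ x, ‖β k x‖ₑ ≤ A) (hA0 : A ≠ 0) (hA' : A ≠ ∞)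
    (hB : ∀ ξ, ∑' k, ‖𝓕 (β k) ξ‖ₑ ≤ B) (hf : ∀ k, Measurable (f k)) (p : ℝ) (m : ℤ) :
    dyadicDistrib volume p
        (fun x ↦ ∑' k, (β k ⋆[ContinuousLinearMap.mul ℂ ℂ] f k) x) m ≤
      (4 * A + 16 * B ^ 2) *
        ∑' n, dyadicKernel p n * ∑' k, dyadicDistrib volume p (f k) (m + n) := by
  set S := ∑' n, dyadicKernel p n * ∑' k, dyadicDistrib volume p (f k) (m + n) with hS
  by_cases hS' : S = ∞
  · rw [hS', ENNReal.mul_top (by simp [hA0])]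
    exact le_top
  let s k : Set V := {x | (2 : ℝ) ^ m < ‖f k x‖}
  have hs k : MeasurableSet (s k) := measurableSet_two_zpow_lt (hf k) m
  have hlarge : ∑' k, ∫⁻ x, ‖(s k).indicator (f k) x‖ₑ ≤ 2 ^ (m + 1 - m * p : ℝ) * S := by
    refine tsum_le_mul_tsum_dyadicDistrib
      (fun k ↦ lintegral_enorm_indicator_large_le (hf k) m) fun n ↦ ?_
    unfold dyadicKernel
    split_ifs
    · rw [two_zpow_eq_rpow, two_zpow_eq_rpow, ← ENNReal.rpow_mul, two_rpow_mul_two_rpow,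
        two_rpow_mul_two_rpow]
      refine le_of_eq ?_
      congr 1
      push_cast
      ring
    · exact zero_le
  have hsmall : ∑' k, ∫⁻ x, ‖(s k)ᶜ.indicator (f k) x‖ₑ ^ 2 ≤
      2 ^ (2 * m + 2 - m * p : ℝ) * S := by
    refine tsum_le_mul_tsum_dyadicDistrib
      (fun k ↦ lintegral_enorm_indicator_small_sq_le (hf k) m) fun n ↦ ?_
    unfold dyadicKernel
    split_ifs
    · exact zero_le
    · rw [two_zpow_eq_rpow, two_zpow_eq_rpow, ← ENNReal.rpow_mul, two_rpow_mul_two_rpow,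
        two_rpow_mul_two_rpow]
      refine le_of_eq ?_
      congr 1
      push_cast
      ring
  have h2 (x : ℝ) : (2 : ℝ≥0∞) ^ x ≠ ∞ :=
    ENNReal.rpow_ne_top_of_ne_zero two_ne_zero ENNReal.ofNat_ne_top
  have h2' (x : ℝ) : (2 : ℝ≥0∞) ^ x ≠ 0 := (ENNReal.rpow_pos two_pos ENNReal.ofNat_ne_top).ne'
  have hvol := volume_lt_enorm_tsum_convolution_le hβ hA hA' hB
    (fun k ↦ (hf k).indicator (hs k))
    (ne_top_of_le_ne_top (ENNReal.mul_ne_top (h2 _) hS') hlarge)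
    (fun k ↦ (hf k).indicator (hs k).compl) (M := 2 ^ m) (fun k x ↦ by
      by_cases hx : x ∈ s k
      · rw [indicator_of_notMem (by simpa using hx), norm_zero]
        positivity
      · rw [indicator_of_mem (by simpa using hx)]
        exact not_lt.1 hx) (h2' (m - 1)) (h2 (m - 1))
  have htt : (2 : ℝ≥0∞) ^ (m - 1 : ℝ) + 2 ^ (m - 1 : ℝ) = 2 ^ m := by
    rw [← two_mul, ← ENNReal.rpow_one 2, ← ENNReal.rpow_mul, two_rpow_mul_two_rpow,
      ENNReal.rpow_one, two_zpow_eq_rpow]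
    congr 1
    ring
  simp_rw [htt, indicator_self_add_compl, ← two_zpow_lt_norm_iff] at hvol
  have hinv1 : ((2 : ℝ≥0∞) ^ (m - 1 : ℝ))⁻¹ = 2 ^ (1 - m : ℝ) := by
    rw [← ENNReal.rpow_neg, neg_sub]
  have hinv2 : (((2 : ℝ≥0∞) ^ (m - 1 : ℝ)) ^ 2)⁻¹ = 2 ^ (2 - 2 * m : ℝ) := by
    rw [sq, two_rpow_mul_two_rpow, ← ENNReal.rpow_neg]
    congr 1
    ring
  have hfour : (2 : ℝ≥0∞) ^ (2 : ℝ) = 4 := by norm_num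
  have hsixteen : (2 : ℝ≥0∞) ^ (4 : ℝ) = 16 := by norm_num
  calc dyadicDistrib volume p
        (fun x ↦ ∑' k, (β k ⋆[ContinuousLinearMap.mul ℂ ℂ] f k) x) m
    _ ≤ 2 ^ (m * p : ℝ) * ((A * (2 ^ (m + 1 - m * p : ℝ) * S)) * 2 ^ (1 - m : ℝ) +
        (B ^ 2 * (2 ^ (2 * m + 2 - m * p : ℝ) * S)) * 2 ^ (2 - 2 * m : ℝ)) := by
      rw [dyadicDistrib, two_zpow_eq_rpow, ← ENNReal.rpow_mul]
      refine mul_le_mul_right (hvol.trans ?_) _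
      rw [div_eq_mul_inv, div_eq_mul_inv, hinv1, hinv2]
      gcongr
    _ = 2 ^ (m * p : ℝ) * 2 ^ (m + 1 - m * p : ℝ) * 2 ^ (1 - m : ℝ) * (A * S) +
        2 ^ (m * p : ℝ) * 2 ^ (2 * m + 2 - m * p : ℝ) * 2 ^ (2 - 2 * m : ℝ) *
          (B ^ 2 * S) := by ring
    _ = (2 : ℝ≥0∞) ^ (2 : ℝ) * (A * S) + 2 ^ (4 : ℝ) * (B ^ 2 * S) := by
      simp_rw [two_rpow_mul_two_rpow]
      congr 3 <;> ring
    _ = (4 * A + 16 * B ^ 2) * S := by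
      rw [hfour, hsixteen]
      ring

theorem lorentzNorm_tsum_convolution_le {β f : ι → V → ℂ} (hβ : ∀ k, Integrable (β k))
    {A B : ℝ≥0∞} (hA : ∀ k, ∫⁻ x, ‖β k x‖ₑ ≤ A) (hA0 : A ≠ 0) (hA' : A ≠ ∞)
    (hB : ∀ ξ, ∑' k, ‖𝓕 (β k) ξ‖ₑ ≤ B) (hf : ∀ k, Measurable (f k)) {p : ℝ} (hp : 0 < p)
    {q : ℝ≥0∞} (hpq : ENNReal.ofReal p ≤ q) :
    lorentzNorm volume p q (fun x ↦ ∑' k, (β k ⋆[ContinuousLinearMap.mul ℂ ℂ] f k) x) ≤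
      ((4 * A + 16 * B ^ 2) * ∑' n, dyadicKernel p n) ^ (1 / p) *
        (∑' k, lorentzNorm volume p q (f k) ^ p) ^ (1 / p) := by
  have hr : 1 ≤ q / ENNReal.ofReal p := by
    rwa [ENNReal.le_div_iff_mul_le (by simp [hp]) (by simp), one_mul]
  have hk k : lorentzNorm volume p q (f k) ^ p =
      seqNorm (q / ENNReal.ofReal p) (dyadicDistrib volume p (f k)) := by
    rw [lorentzNorm_eq_seqNorm hp, ← ENNReal.rpow_mul, one_div_mul_cancel hp.ne',
      ENNReal.rpow_one]
  simp_rw [hk]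
  rw [lorentzNorm_eq_seqNorm hp, ← ENNReal.mul_rpow_of_nonneg _ _ (by positivity), mul_assoc]
  gcongr
  refine (seqNorm_mono (dyadicDistrib_tsum_convolution_le hβ hA hA0 hA' hB hf p)).trans ?_
  rw [seqNorm_const_mul hr]
  gcongr
  refine (seqNorm_tsum_mul_shift_le hr (dyadicKernel p)
    fun m ↦ ∑' k, dyadicDistrib volume p (f k) m).trans ?_
  gcongr
  exact seqNorm_tsum_le hr _

end DyadicConvolution

end AlmostOrthogonality

/-- Almost orthogonality: if `sup_k ‖β_k‖_{L¹} ≤ A` and `sup_ξ Σ_k |β̂_k(ξ)| ≤ B`,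
then `‖Σ_k β_k * f_k‖_{L^{p,q}} ≤ C (Σ_k ‖f_k‖_{L^{p,q}}^p)^{1/p}` for `1 < p < 2`,
`p ≤ q ≤ ∞`. -/
theorem statement0 (d : ℕ) (hd : 1 ≤ d) (p : ℝ) (hp1 : 1 < p) (hp2 : p < 2)
    (q : ℝ≥0∞) (hpq : ENNReal.ofReal p ≤ q) (A B : ℝ) :
    ∃ C : ℝ, 0 < C ∧
      ∀ (β : ℤ → EuclideanSpace ℝ (Fin d) → ℂ),
        (∀ k, Integrable (β k)) →
        (∀ k, (∫ x, ‖β k x‖) ≤ A) →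
        (∀ ξ, (∑' k : ℤ, (‖𝓕 (β k) ξ‖₊ : ℝ≥0∞)) ≤ ENNReal.ofReal B) →
        ∀ f : ℤ → EuclideanSpace ℝ (Fin d) → ℂ, (∀ k, Measurable (f k)) →
          lorentzNorm volume p q
              (fun x => ∑' k : ℤ, (β k ⋆[ContinuousLinearMap.mul ℂ ℂ] f k) x) ≤
            ENNReal.ofReal C *
              (∑' k : ℤ, (lorentzNorm volume p q (f k)) ^ p) ^ (1 / p) := by
  have hp : 0 < p := zero_lt_one.trans hp1
  set K : ℝ≥0∞ := ((4 * max (ENNReal.ofReal A) 1 + 16 * ENNReal.ofReal B ^ 2) *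
    ∑' n, dyadicKernel p n) ^ (1 / p)
  have hA' : max (ENNReal.ofReal A) 1 ≠ ∞ := by simp
  have hK : K ≠ ∞ := ENNReal.rpow_ne_top_of_nonneg (by positivity) (ENNReal.mul_ne_top
    (ENNReal.add_ne_top.2 ⟨ENNReal.mul_ne_top (by simp) hA', ENNReal.mul_ne_top (by simp)
      (by simp)⟩) (tsum_dyadicKernel_ne_top hp1 hp2))
  refine ⟨K.toReal + 1, by positivity, fun β hβ hA hB f hf ↦ ?_⟩
  refine (lorentzNorm_tsum_convolution_le hβ (fun k ↦ ?_)
    (zero_lt_one.trans_le (le_max_right _ _)).ne' hA' hB hf hp hpq).trans ?_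
  · rw [← ofReal_integral_norm_eq_lintegral_enorm (hβ k)]
    exact (ENNReal.ofReal_le_ofReal (hA k)).trans (le_max_left _ _)
  · refine mul_le_mul_left ?_ _
    exact (ENNReal.le_ofReal_iff_toReal_le hK (by positivity)).2 (by linarith)
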